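/- Let x, y ∈ W_n with ℓ_t(x) = ℓ_t(y) = l, x ≤ y in the Bruhat order, and b_x = b_y = b. Then xb ≤ yb, and the map z ↦ z b^{−1} is an isomorphism of posets from the Bruhat interval [xb, yb] onto the Bruhat interval [x, y]. -/

import Mathlib

open scoped Classical

noncomputable section

/-! ## The hyperoctahedral group `W_n` as signed permutations of `I_n ⊆ ℤ` -/

abbrev P := Equiv.Perm ℤ

/-- `W_n` : permutations of `I_n = {±1, …, ±n}` commuting with `i ↦ -i`,
realized as permutations of `ℤ` fixing everything outside `I_n`. -/
def Wset (n : ℕ) : Set P :=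
  {π | (∀ i : ℤ, π (-i) = - π i) ∧ ∀ i : ℤ, (n : ℤ) < |i| → π i = i}

/-- the generator `t = (1, -1)` -/
def tgen : P := Equiv.swap 1 (-1)

/-- the generator `s_i = (i, i+1)(-i, -(i+1))` -/
def sgen (i : ℕ) : P :=
  Equiv.swap (i : ℤ) ((i : ℤ) + 1) * Equiv.swap (-(i : ℤ)) (-((i : ℤ) + 1))

/-- the generating set `S_n = {t, s_1, …, s_{n-1}}` -/
def Sset (n : ℕ) : Set P := insert tgen (sgen '' Set.Icc 1 (n - 1))

/-- the length function of `W_n` with respect to `S_n` -/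
def len (n : ℕ) (w : P) : ℕ :=
  sInf {k | ∃ l : List P, (∀ g ∈ l, g ∈ Sset n) ∧ l.prod = w ∧ l.length = k}

/-- number of occurrences of `tgen` in a list -/
def tcount (l : List P) : ℕ := (l.map (fun g => if g = tgen then 1 else 0)).sum

/-- `ℓ_t(w)` : the number of occurrences of `t` in a (any) reduced expression of `w` -/
def tlen (n : ℕ) (w : P) : ℕ :=
  sInf {k | ∃ l : List P, (∀ g ∈ l, g ∈ Sset n) ∧ l.prod = w ∧
    l.length = len n w ∧ tcount l = k}

/-- the Bruhat order on `W_n` : `x ≤ y` iff some reduced expression of `y`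
has a subword whose product is `x`. -/
def bruhat (n : ℕ) (x y : P) : Prop :=
  ∃ l l' : List P, (∀ g ∈ l, g ∈ Sset n) ∧ l.prod = y ∧ l.length = len n y ∧
    List.Sublist l' l ∧ l'.prod = x

/-! ## Generalized Robinson–Schensted correspondence -/

abbrev Tab := List (List ℕ)

/-- row insertion of `x` into one row; returns the new row and the bumped entry (if any) -/
def insRow (x : ℕ) : List ℕ → List ℕ × Option ℕ
  | [] => ([x], none)
  | y :: ys =>
    if x < y then (x :: ys, some y)
    else
      let p := insRow x ys
      (y :: p.1, p.2)

/-- Schensted insertion of `x` into a tableau; returns the new tableau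
and the (row, column) coordinates of the newly created box. -/
def insTab (x : ℕ) : Tab → Tab × ℕ × ℕ
  | [] => ([[x]], 0, 0)
  | row :: rest =>
    let p := insRow x row
    match p.2 with
    | none => (p.1 :: rest, 0, row.length)
    | some b =>
      let q := insTab b rest
      (p.1 :: q.1, q.2.1 + 1, q.2.2)

/-- place the label `lbl` at the end of row `pos.1` of the recording tableau -/
def place (lbl : ℕ) (pos : ℕ × ℕ) (T : Tab) : Tab :=
  if pos.1 < T.length then T.set pos.1 ((T.getD pos.1 []) ++ [lbl]) else T ++ [[lbl]]

/-- one step of the generalized RS algorithm: insert `|π(i)|` into `A⁺` or `A⁻`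
according to the sign of `π(i)`, and record `i` in the corresponding `B`-tableau. -/
def RSstep (π : P) (st : (Tab × Tab) × (Tab × Tab)) (i : ℕ) : (Tab × Tab) × (Tab × Tab) :=
  let v := (π (i : ℤ)).natAbs
  if 0 < π (i : ℤ) then
    let p := insTab v st.1.1
    ((p.1, st.1.2), (place i p.2 st.2.1, st.2.2))
  else
    let p := insTab v st.1.2
    ((st.1.1, p.1), (st.2.1, place i p.2 st.2.2))

def RSfull (n : ℕ) (π : P) : (Tab × Tab) × (Tab × Tab) :=
  (((List.range n).map (· + 1)).foldl (RSstep π)) ((([], []), ([], [])))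

/-- the insertion bitableau `A_n(π) = (A⁺, A⁻)` -/
def Atab (n : ℕ) (π : P) : Tab × Tab := (RSfull n π).1

/-- the recording bitableau `B_n(π) = (B⁺, B⁻)` -/
def Btab (n : ℕ) (π : P) : Tab × Tab := (RSfull n π).2

/-- `T` is a standard Young tableau -/
def IsStdTab (T : Tab) : Prop :=
  (∀ row ∈ T, row ≠ [] ∧ row.Chain' (· < ·)) ∧
  T.Chain' (fun r1 r2 => r2.length ≤ r1.length) ∧
  ∀ i j : ℕ, i + 1 < T.length → j < (T.getD (i + 1) []).length →
    (T.getD i []).getD j 0 < (T.getD (i + 1) []).getD j 0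

/-- `(T₁, T₂)` is an `n`-standard bitableau: both standard, entry sets disjoint
with union `{1, …, n}` -/
def IsNStdBitab (n : ℕ) (p : Tab × Tab) : Prop :=
  IsStdTab p.1 ∧ IsStdTab p.2 ∧ (p.1.flatten ++ p.2.flatten).Perm (List.range' 1 n)

/-- the shape of a bitableau -/
def shape2 (p : Tab × Tab) : List ℕ × List ℕ := (p.1.map List.length, p.2.map List.length)

/-! ## Knuth relations -/

/-- `t_i = (i, -i)` -/
def ttgen (i : ℕ) : P := Equiv.swap (i : ℤ) (-(i : ℤ))

/-- `S'_n = S_n ∪ {t_1, …, t_n}` -/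
def Sprime (n : ℕ) : Set P := Sset n ∪ (ttgen '' Set.Icc 1 n)

/-- the extended left descent set `L'(w)` -/
def Ldesc (n : ℕ) (w : P) : Set P := {u ∈ Sprime n | len n (u * w) < len n w}

/-- the elementary relation `x —s→ y` -/
def knuthStep (n : ℕ) (x y : P) : Prop :=
  ∃ i ∈ Set.Icc 1 (n - 1), y = sgen i * x ∧ len n x < len n y ∧
    ¬ (Ldesc n x ⊆ Ldesc n y)

/-- the relation `x ↔_L y` -/
def knuthRel (n : ℕ) : P → P → Prop :=
  Relation.ReflTransGen (fun a b => knuthStep n a b ∨ knuthStep n b a)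

/-! ## Parabolic subgroups, coset representatives and the decomposition -/

/-- the parabolic subgroup `𝔖_n = ⟨s_1, …, s_{n-1}⟩` -/
def SymN (n : ℕ) : Subgroup P := Subgroup.closure (sgen '' Set.Icc 1 (n - 1))

/-- the parabolic subgroup `𝔖_{l, n-l} = ⟨{s_1, …, s_{n-1}} \ {s_l}⟩` -/
def SymLR (n l : ℕ) : Subgroup P :=
  Subgroup.closure (sgen '' {i | 1 ≤ i ∧ i ≤ n - 1 ∧ i ≠ l})

/-- `Y_{l, n-l}` : minimal length representatives of left cosets of `𝔖_{l,n-l}` in `𝔖_n` -/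
def Yset (n l : ℕ) : Set P :=
  {w | w ∈ SymN n ∧ ∀ u ∈ SymLR n l, len n w ≤ len n (w * u)}

/-- `X_n` : minimal length representatives of the left cosets `w 𝔖_n` in `W_n` -/
def Xset (n : ℕ) : Set P :=
  {w | w ∈ Wset n ∧ ∀ u ∈ SymN n, len n w ≤ len n (w * u)}

/-- `X_n^{(l)}` -/
def Xl (n l : ℕ) : Set P := {w ∈ Xset n | tlen n w = l}

/-- `r_1 = t`, `r_{i+1} = s_i r_i` -/
def rgen : ℕ → P
  | 0 => 1
  | 1 => tgen
  | (i + 2) => sgen (i + 1) * rgen (i + 1)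

/-- `a_l = r_1 r_2 ⋯ r_l` -/
def al (l : ℕ) : P := ((List.range l).map (fun k => rgen (k + 1))).prod

/-- the set `X_n^{(l)} ⬝ 𝔖_{l, n-l}` -/
def XSset (n l : ℕ) : Set P := Set.image2 (· * ·) (Xl n l) (SymLR n l : Set P)

/-- `w = a ⬝ a_l ⬝ σ ⬝ b⁻¹` is the canonical decomposition of `w`
(with `a, b ∈ Y_{l,n-l}`, `σ ∈ 𝔖_{l,n-l}` and additivity of lengths) -/
def IsDecomp (n l : ℕ) (w a σ b : P) : Prop :=
  a ∈ Yset n l ∧ b ∈ Yset n l ∧ σ ∈ SymLR n l ∧ w = a * al l * σ * b⁻¹ ∧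
    len n w = len n a + len n (al l) + len n σ + len n b

/-- the relation `w ⇝_L w'` -/
def squig (n : ℕ) (w w' : P) : Prop :=
  ∃ l a σ b a' σ', tlen n w = l ∧ tlen n w' = l ∧
    IsDecomp n l w a σ b ∧ IsDecomp n l w' a' σ' b ∧ knuthRel n σ σ'

/-! ## The two-parameter Iwahori–Hecke algebra and Kazhdan–Lusztig data -/

/-- the ring `A = ℤ[V^{±1}, v^{±1}]`, as the group algebra of `Γ = ℤ × ℤ`
(a monomial `V^i v^j` corresponds to `(i,j) ∈ ℤ × ℤ`). -/
abbrev RR := AddMonoidAlgebra ℤ (ℤ × ℤ)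

/-- the monomial with exponent `g` -/
def mono (g : ℤ × ℤ) : RR := AddMonoidAlgebra.single g 1

/-- `Γ₋` for the lexicographic order with `V ≫ v`: `V^i v^j < 1` -/
def Gneg (g : ℤ × ℤ) : Prop := g.1 < 0 ∨ (g.1 = 0 ∧ g.2 < 0)

/-- an element of `ℤ[Γ₋]` : all monomials lie in `Γ₋` -/
def inNeg (f : RR) : Prop := ∀ g ∈ f.coeff.support, Gneg g

/-- the bar involution of `A`, `V ↦ V⁻¹`, `v ↦ v⁻¹` -/
def barR : RR → RR := fun f => AddMonoidAlgebra.ofCoeff (Finsupp.equivMapDomain (Equiv.neg (ℤ × ℤ)) f.coeff)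

/-- the parameter `v_s` of a generator (`v_t = V`, `v_{s_i} = v`) -/
def vgen (g : P) : RR := if g = tgen then mono (1, 0) else mono (0, 1)

/-- the inverse `v_s⁻¹` of the parameter of a generator -/
def vgenInv (g : P) : RR := if g = tgen then mono (-1, 0) else mono (0, -1)

/-- the free `A`-module with basis indexed by permutations; the Hecke algebra
`H_n` is carried by the elements supported on `W_n`. -/
abbrev HH := P →₀ RR

/-- the standard basis element `T_w` -/
def TT (w : P) : HH := Finsupp.single w 1

/-- All the data attached to the Iwahori–Hecke algebra `H_n` of `W_n` over
`A = ℤ[V^{±1}, v^{±1}]`: the multiplication, the bar involution, the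
Kazhdan–Lusztig basis `C_w = Σ_y P*_{y,w} T_y` (for the order on `Γ` given
by `Γ₊ = {V^i v^j : i > 0} ∪ {v^j : j > 0}`), and Lusztig's `M`-polynomials,
together with their defining properties. -/
structure KLData (n : ℕ) where
  mul : HH → HH → HH
  mul_add_left : ∀ a b c, mul (a + b) c = mul a c + mul b c
  mul_add_right : ∀ a b c, mul a (b + c) = mul a b + mul a c
  mul_smul_left : ∀ (r : RR) a b, mul (r • a) b = r • mul a b
  mul_smul_right : ∀ (r : RR) a b, mul a (r • b) = r • mul a b
  mul_assoc : ∀ a b c, mul (mul a b) c = mul a (mul b c)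
  one_mul : ∀ a, mul (TT 1) a = a
  mul_one : ∀ a, mul a (TT 1) = a
  /-- `T_w T_{w'} = T_{w w'}` when lengths add -/
  T_mul : ∀ w w', w ∈ Wset n → w' ∈ Wset n →
    len n (w * w') = len n w + len n w' → mul (TT w) (TT w') = TT (w * w')
  /-- the quadratic relations `T_s² = T_1 + (v_s - v_s⁻¹) T_s` -/
  T_sq : ∀ g ∈ Sset n, mul (TT g) (TT g) = TT 1 + (vgen g - vgenInv g) • TT g
  bar : HH → HH
  bar_add : ∀ a b, bar (a + b) = bar a + bar b
  bar_smul : ∀ (r : RR) a, bar (r • a) = barR r • bar a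
  bar_mul : ∀ a b, bar (mul a b) = mul (bar a) (bar b)
  /-- `bar T_s = T_s⁻¹ = T_s + (v_s⁻¹ - v_s) T_1` -/
  bar_gen : ∀ g ∈ Sset n, bar (TT g) = TT g + (vgenInv g - vgen g) • TT 1
  /-- the Kazhdan–Lusztig basis element `C_w`, whose coordinate at `T_y` is
  the polynomial `P*_{y,w}` -/
  C : P → HH
  /-- `P*_{w,w} = 1` -/
  C_self : ∀ w, C w w = 1
  /-- `P*_{y,w} = 0` unless `y ≤ w` -/
  C_supp : ∀ w y, C w y ≠ 0 → bruhat n y w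
  /-- `P*_{y,w} ∈ ℤ[Γ₋]` for `y < w` -/
  C_neg : ∀ w y, y ≠ w → inNeg (C w y)
  /-- `C_w` is bar-invariant -/
  C_bar : ∀ w, w ∈ Wset n → bar (C w) = C w
  /-- `M s w` is the finitely supported family `z ↦ M^s_{z,w}` -/
  M : P → P → (P →₀ RR)
  M_supp : ∀ s w z, (M s w) z ≠ 0 → bruhat n z w ∧ z ≠ w ∧ len n (s * z) < len n z
  /-- the symmetry condition `bar M^s_{y,w} = M^s_{y,w}` -/
  M_bar : ∀ s w z, barR ((M s w) z) = (M s w) z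
  /-- the condition `M^s_{y,w} + Σ_{y<z<w, sz<z} P*_{y,z} M^s_{z,w} - v_s P*_{y,w} ∈ ℤ[Γ₋]` -/
  M_cond : ∀ s ∈ Sset n, ∀ y w, len n (s * y) < len n y → len n w < len n (s * w) →
    bruhat n y w → y ≠ w →
    inNeg ((M s w) y + (M s w).sum (fun z m => if z = y then 0 else C z y * m)
      - vgen s * C w y)
  /-- `C_s C_w = C_{sw} + Σ_{z<w, sz<z} M^s_{z,w} C_z` when `sw > w` -/
  mulC_up : ∀ s ∈ Sset n, ∀ w ∈ Wset n, len n w < len n (s * w) →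
    mul (C s) (C w) = C (s * w) + (M s w).sum (fun z m => m • C z)
  /-- `C_s C_w = (v_s + v_s⁻¹) C_w` when `sw < w` -/
  mulC_down : ∀ s ∈ Sset n, ∀ w ∈ Wset n, len n (s * w) < len n w →
    mul (C s) (C w) = (vgen s + vgenInv s) • C w

/-- `P_{y,w} = v_y⁻¹ v_w P*_{y,w}` -/
def Ppoly (n : ℕ) (D : KLData n) (y w : P) : RR :=
  mono ((tlen n w : ℤ) - (tlen n y : ℤ),
        ((len n w : ℤ) - (tlen n w : ℤ)) - ((len n y : ℤ) - (tlen n y : ℤ))) * D.C w y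

/-- the `R`-polynomials : `bar T_w = Σ_y R_{y,w} T_y` -/
def Rpoly {n : ℕ} (D : KLData n) (y w : P) : RR := (D.bar (TT w)) y

/-- `y ≤_{L,s} w` : `C_y` occurs with non-zero coefficient in `C_s C_w`
(expressed in the `C`-basis), for some `s ∈ S_n`, `y ≠ w` -/
def leLelem {n : ℕ} (D : KLData n) (y w : P) : Prop :=
  ∃ s ∈ Sset n, len n w < len n (s * w) ∧ (y = s * w ∨ (D.M s w) y ≠ 0)

/-- the preorder `≤_L` -/
def leL {n : ℕ} (D : KLData n) : P → P → Prop := Relation.ReflTransGen (leLelem D)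

/-- the equivalence `∼_L`; its classes are the left cells -/
def simL {n : ℕ} (D : KLData n) (y w : P) : Prop := leL D y w ∧ leL D w y

/-- `f` is a polynomial in `q = v²` -/
def isPolyInQ (f : RR) : Prop := ∀ g ∈ f.coeff.support, g.1 = 0 ∧ 0 ≤ g.2 ∧ 2 ∣ g.2

end

/-!
Let `u = x b = a_x a_l σ_x`, and similarly for `y`. Among the positive positions, `u` is negative
exactly at `1, …, l`, while `b ∈ Y_{l, n-l}` is increasing on `1, …, l` and on the positions beyond
`l`. Hence no positive root inverted by `b` is inverted by `u`, which means that
`ℓ(u b⁻¹) = ℓ(u) + ℓ(b⁻¹)`. By the lifting property, right multiplication by an element with which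
lengths add preserves and reflects the Bruhat order. Finally, the number of negative values at
positions `≥ k` can only increase along the Bruhat order, so every element of `[xb, yb]` or of
`[x, y]` is negative at the same positions as the endpoints, and the additivity applies to it.
-/

namespace SignedPerm

open Relation
open scoped Pointwise

variable {n l : ℕ} {u v w s b : P} {i j : ℤ}

/-! ### Signed permutations and reflections -/

/-- The signed permutations of `ℤ`: the group `W_∞` containing every `W_n`. -/
def signedPerm : Subgroup P := Subgroup.centralizer {Equiv.neg ℤ}

theorem mem_signedPerm : w ∈ signedPerm ↔ ∀ i, w (-i) = -w i := by
  simp [signedPerm, Subgroup.mem_centralizer_singleton_iff, Equiv.ext_iff]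

theorem apply_zero_of_mem_signedPerm (hw : w ∈ signedPerm) : w 0 = 0 := by
  have := mem_signedPerm.1 hw 0
  rw [neg_zero] at this
  lia

/-- Positive roots of the signed permutations. The pair `(i, j)` stands for the root `e_j - e_i`,
where `e_{-k} = -e_k`, so that `(i, j)` and `(-j, -i)` are the same root, and the short root `e_j`
is represented by `(-j, j)`. -/
structure IsPosRoot (i j : ℤ) : Prop where
  lt : i < j
  left_ne : i ≠ 0
  right_ne : j ≠ 0

theorem isPosRoot_apply (hw : w ∈ signedPerm) (hi : i ≠ 0) (hj : j ≠ 0) (hlt : w i < w j) :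
    IsPosRoot (w i) (w j) :=
  have h0 := apply_zero_of_mem_signedPerm hw
  ⟨hlt, h0 ▸ w.injective.ne hi, h0 ▸ w.injective.ne hj⟩

/-- The reflection in the root `(i, j)`, i.e. the signed permutation exchanging `i` and `j`. -/
def reflection (i j : ℤ) : P :=
  if i = -j then Equiv.swap i j else Equiv.swap i j * Equiv.swap (-i) (-j)

theorem reflection_apply (h : IsPosRoot i j) (k : ℤ) :
    reflection i j k =
      if k = i then j else if k = j then i else if k = -i then -j else if k = -j then -i
      else k := by
  obtain ⟨_, _, _⟩ := h
  unfold reflection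
  split_ifs <;> simp only [Equiv.Perm.mul_apply, Equiv.swap_apply_def] <;> split_ifs <;> lia

theorem reflection_apply_left (h : IsPosRoot i j) : reflection i j i = j := by
  simp [reflection_apply h]

theorem reflection_apply_right (h : IsPosRoot i j) : reflection i j j = i := by
  simp [reflection_apply h, h.lt.ne']

theorem reflection_mul_self (h : IsPosRoot i j) : reflection i j * reflection i j = 1 := by
  obtain ⟨_, _, _⟩ := id h
  ext k
  simp only [Equiv.Perm.mul_apply, reflection_apply h, Equiv.Perm.one_apply]
  split_ifs <;> lia

theorem reflection_mem_signedPerm (h : IsPosRoot i j) : reflection i j ∈ signedPerm := by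
  obtain ⟨_, _, _⟩ := id h
  refine mem_signedPerm.2 fun k => ?_
  simp only [reflection_apply h]
  split_ifs <;> lia

theorem reflection_apply_mul (hw : w ∈ signedPerm) (i j : ℤ) :
    reflection (w i) (w j) * w = w * reflection i j := by
  rw [mem_signedPerm] at hw
  unfold reflection
  simp only [← hw, w.injective.eq_iff, Equiv.swap_apply_apply]
  split_ifs <;> group

/-! ### The generators -/

theorem tgen_apply (k : ℤ) : tgen k = if k = 1 then -1 else if k = -1 then 1 else k := by
  simp only [tgen, Equiv.swap_apply_def]

theorem sgen_apply {m : ℕ} (hm : 1 ≤ m) (k : ℤ) :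
    sgen m k =
      if k = m then (m : ℤ) + 1 else if k = m + 1 then (m : ℤ)
      else if k = -m then -((m : ℤ) + 1) else if k = -((m : ℤ) + 1) then -(m : ℤ) else k := by
  simp only [sgen, Equiv.Perm.mul_apply, Equiv.swap_apply_def]
  split_ifs <;> lia

theorem tgen_eq_reflection : tgen = reflection (-1) 1 := by
  simp [tgen, reflection, Equiv.swap_comm]

theorem sgen_eq_reflection (m : ℕ) : sgen m = reflection m (m + 1) := by
  rw [reflection, if_neg (by lia), sgen]

theorem eq_tgen_or_eq_sgen (hs : s ∈ Sset n) :
    s = tgen ∨ ∃ m : ℕ, 1 ≤ m ∧ m ≤ n - 1 ∧ s = sgen m := by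
  rcases hs with rfl | ⟨m, ⟨h1, hn⟩, rfl⟩
  exacts [.inl rfl, .inr ⟨m, h1, hn, rfl⟩]

theorem exists_eq_reflection (hs : s ∈ Sset n) : ∃ i j, IsPosRoot i j ∧ s = reflection i j := by
  rcases eq_tgen_or_eq_sgen hs with rfl | ⟨m, hm, -, rfl⟩
  · exact ⟨-1, 1, ⟨by lia, by lia, by lia⟩, tgen_eq_reflection⟩
  · exact ⟨m, m + 1, ⟨by lia, by lia, by lia⟩, sgen_eq_reflection m⟩

theorem gen_mul_self (hs : s ∈ Sset n) : s * s = 1 := by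
  obtain ⟨i, j, h, rfl⟩ := exists_eq_reflection hs
  exact reflection_mul_self h

theorem gen_inv (hs : s ∈ Sset n) : s⁻¹ = s :=
  inv_eq_of_mul_eq_one_left (gen_mul_self hs)

theorem gen_mem_signedPerm (hs : s ∈ Sset n) : s ∈ signedPerm := by
  obtain ⟨i, j, h, rfl⟩ := exists_eq_reflection hs
  exact reflection_mem_signedPerm h

theorem gen_apply_lt_or_eq_reflection (hs : s ∈ Sset n) (h : IsPosRoot i j) :
    s i < s j ∨ s = reflection i j := by
  refine or_iff_not_imp_left.2 fun hlt => ?_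
  obtain ⟨_, _, _⟩ := id h
  rcases eq_tgen_or_eq_sgen hs with rfl | ⟨m, hm, -, rfl⟩
  · obtain ⟨rfl, rfl⟩ : i = -1 ∧ j = 1 := by
      simp only [tgen_apply] at hlt
      split_ifs at hlt <;> lia
    exact tgen_eq_reflection
  · have hroot : (i = m ∧ j = m + 1) ∨ (i = -(m + 1) ∧ j = -m) := by
      simp only [sgen_apply hm] at hlt
      split_ifs at hlt <;> lia
    ext k
    rw [sgen_apply hm, reflection_apply h]
    rcases hroot with ⟨rfl, rfl⟩ | ⟨rfl, rfl⟩ <;> split_ifs <;> lia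

/-- The group `W_n`, presented as the group generated by `S_n`: lengths and the Bruhat order only
see products of generators. -/
def hyperoctahedral (n : ℕ) : Subgroup P := Subgroup.closure (Sset n)

theorem gen_mem_hyperoctahedral (hs : s ∈ Sset n) : s ∈ hyperoctahedral n :=
  Subgroup.subset_closure hs

theorem hyperoctahedral_le_signedPerm : hyperoctahedral n ≤ signedPerm :=
  (Subgroup.closure_le _).2 fun _ => gen_mem_signedPerm

theorem hyperoctahedral_le_fixingSubgroup (hn : 1 ≤ n) :
    hyperoctahedral n ≤ fixingSubgroup P (Set.Ioi (n : ℤ)) := by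
  refine (Subgroup.closure_le _).2 fun s hs => (mem_fixingSubgroup_iff P).2 fun k hk => ?_
  rw [Set.mem_Ioi] at hk
  rw [Equiv.Perm.smul_def]
  rcases eq_tgen_or_eq_sgen hs with rfl | ⟨m, hm, _, rfl⟩
  · rw [tgen_apply, if_neg (by lia), if_neg (by lia)]
  · rw [sgen_apply hm]
    split_ifs <;> lia

theorem apply_eq_of_lt (hn : 1 ≤ n) (hw : w ∈ hyperoctahedral n) (h : (n : ℤ) < i) : w i = i :=
  (mem_fixingSubgroup_iff P).1 (hyperoctahedral_le_fixingSubgroup hn hw) i h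

/-! ### Words and length -/

theorem prod_mem_hyperoctahedral {L : List P} (hL : ∀ g ∈ L, g ∈ Sset n) :
    L.prod ∈ hyperoctahedral n :=
  Subgroup.list_prod_mem _ fun g hg => gen_mem_hyperoctahedral (hL g hg)

theorem exists_word (hw : w ∈ hyperoctahedral n) :
    ∃ L : List P, (∀ g ∈ L, g ∈ Sset n) ∧ L.prod = w := by
  apply Submonoid.exists_list_of_mem_closure
  have hinv : (Sset n)⁻¹ ⊆ Sset n := fun s hs => by
    rw [← inv_inv s, gen_inv hs]
    exact hs
  rwa [hyperoctahedral, ← Subgroup.mem_toSubmonoid, Subgroup.closure_toSubmonoid,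
    Set.union_eq_left.2 hinv] at hw

theorem len_prod_le {L : List P} (hL : ∀ g ∈ L, g ∈ Sset n) : len n L.prod ≤ L.length :=
  Nat.sInf_le ⟨L, hL, rfl, rfl⟩

/-- `L` is a reduced word in the generators `S_n`. -/
def IsReduced (n : ℕ) (L : List P) : Prop :=
  (∀ g ∈ L, g ∈ Sset n) ∧ L.length = len n L.prod

theorem exists_isReduced (hw : w ∈ hyperoctahedral n) : ∃ L, IsReduced n L ∧ L.prod = w := by
  obtain ⟨L₀, hL₀, h₀⟩ := exists_word hw
  obtain ⟨L, hL, rfl, hlen⟩ := Nat.sInf_mem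
    (s := {k | ∃ L : List P, (∀ g ∈ L, g ∈ Sset n) ∧ L.prod = w ∧ L.length = k})
    ⟨_, L₀, hL₀, h₀, rfl⟩
  exact ⟨L, ⟨hL, hlen⟩, rfl⟩

theorem len_mul_le (hu : u ∈ hyperoctahedral n) (hv : v ∈ hyperoctahedral n) :
    len n (u * v) ≤ len n u + len n v := by
  obtain ⟨L, hL, rfl⟩ := exists_isReduced hu
  obtain ⟨M, hM, rfl⟩ := exists_isReduced hv
  rw [← hL.2, ← hM.2, ← List.prod_append, ← List.length_append]
  exact len_prod_le (List.forall_mem_append.2 ⟨hL.1, hM.1⟩)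

theorem len_one (n : ℕ) : len n 1 = 0 :=
  Nat.le_zero.1 (len_prod_le (L := []) (by simp))

theorem len_gen_le (hs : s ∈ Sset n) : len n s ≤ 1 := by
  simpa using len_prod_le (L := [s]) (by simpa using hs)

theorem len_mul_gen_le (hw : w ∈ hyperoctahedral n) (hs : s ∈ Sset n) :
    len n (w * s) ≤ len n w + 1 :=
  (len_mul_le hw (gen_mem_hyperoctahedral hs)).trans (Nat.add_le_add_left (len_gen_le hs) _)

theorem IsReduced.of_append_singleton {L : List P} (h : IsReduced n (L ++ [s])) :
    IsReduced n L ∧ s ∈ Sset n ∧ len n L.prod < len n (L.prod * s) := by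
  obtain ⟨hL, hs⟩ := List.forall_mem_append.1 h.1
  rw [List.forall_mem_singleton] at hs
  have hlen := h.2
  rw [List.length_append, List.length_singleton, List.prod_append, List.prod_singleton] at hlen
  have hle := len_prod_le hL
  have hge := len_mul_gen_le (prod_mem_hyperoctahedral hL) hs
  exact ⟨⟨hL, by lia⟩, hs, by lia⟩

theorem reduced_induction {p : (w : P) → w ∈ hyperoctahedral n → Prop} (one : p 1 (one_mem _))
    (mul_gen : ∀ w s (hw : w ∈ hyperoctahedral n) (hs : s ∈ Sset n), len n w < len n (w * s) →
      p w hw → p (w * s) (mul_mem hw (gen_mem_hyperoctahedral hs)))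
    (hw : w ∈ hyperoctahedral n) : p w hw := by
  obtain ⟨L, hL, rfl⟩ := exists_isReduced hw
  induction L using List.reverseRecOn with
  | nil => exact one
  | append_singleton L s ih =>
    obtain ⟨hred, hs, hlt⟩ := hL.of_append_singleton
    have hLw := prod_mem_hyperoctahedral hred.1
    simpa only [List.prod_append, List.prod_singleton] using
      mul_gen _ _ hLw hs hlt (ih hred hLw)

theorem strong_exchange {L : List P} (hL : ∀ g ∈ L, g ∈ Sset n) (h : IsPosRoot i j)
    (hlt : L.prod j < L.prod i) :
    ∃ k < L.length, (L.eraseIdx k).prod = L.prod * reflection i j := by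
  induction L with
  | nil => exact absurd hlt h.lt.not_gt
  | cons g L ih =>
    obtain ⟨hg, hL⟩ := List.forall_mem_cons.1 hL
    rw [List.prod_cons] at hlt ⊢
    rcases lt_or_gt_of_ne (L.prod.injective.ne h.lt.ne) with hij | hij
    · have hw := hyperoctahedral_le_signedPerm (prod_mem_hyperoctahedral hL)
      have hroot := isPosRoot_apply hw h.left_ne h.right_ne hij
      obtain rfl := (gen_apply_lt_or_eq_reflection hg hroot).resolve_left hlt.not_gt
      refine ⟨0, by simp, ?_⟩
      rw [List.eraseIdx_cons_zero, mul_assoc, ← reflection_apply_mul hw, ← mul_assoc,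
        gen_mul_self hg, one_mul]
    · obtain ⟨k, hk, hprod⟩ := ih hL hij
      refine ⟨k + 1, by simpa using hk, ?_⟩
      rw [List.eraseIdx_cons_succ, List.prod_cons, hprod, mul_assoc]

theorem len_mul_reflection_lt (hw : w ∈ hyperoctahedral n) (h : IsPosRoot i j) (hlt : w j < w i) :
    len n (w * reflection i j) < len n w := by
  obtain ⟨L, ⟨hL, hlen⟩, rfl⟩ := exists_isReduced hw
  obtain ⟨k, hk, hprod⟩ := strong_exchange hL h hlt
  have hle := len_prod_le (L := L.eraseIdx k) fun g hg => hL g (List.mem_of_mem_eraseIdx hg)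
  rw [hprod, List.length_eraseIdx_of_lt hk] at hle
  lia

theorem apply_lt_of_len_le (hw : w ∈ hyperoctahedral n) (h : IsPosRoot i j)
    (hle : len n w ≤ len n (w * reflection i j)) : w i < w j :=
  lt_of_le_of_ne (not_lt.1 fun hlt => (len_mul_reflection_lt hw h hlt).not_ge hle)
    (w.injective.ne h.lt.ne)

theorem len_lt_of_apply_lt (hw : w ∈ hyperoctahedral n) (h : IsPosRoot i j)
    (hr : reflection i j ∈ hyperoctahedral n) (hlt : w i < w j) :
    len n w < len n (w * reflection i j) := by
  have hdesc : (w * reflection i j) j < (w * reflection i j) i := by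
    rwa [Equiv.Perm.mul_apply, Equiv.Perm.mul_apply, reflection_apply_left h,
      reflection_apply_right h]
  simpa only [mul_assoc, reflection_mul_self h, mul_one] using
    len_mul_reflection_lt (mul_mem hw hr) h hdesc

theorem len_mul_of_disjoint_inversions {c : P} (hu : u ∈ hyperoctahedral n)
    (hc : c ∈ hyperoctahedral n) (h : ∀ i j, IsPosRoot i j → c⁻¹ j < c⁻¹ i → u i < u j) :
    len n (u * c) = len n u + len n c := by
  induction hc using reduced_induction with
  | one => simp [len_one]
  | mul_gen c s hc hs hlt ih =>
    have hodd := hyperoctahedral_le_signedPerm hc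
    have hsc (k : ℤ) : (c * s)⁻¹ k = s (c⁻¹ k) := by
      rw [mul_inv_rev, gen_inv hs, Equiv.Perm.mul_apply]
    have hlen := ih fun i j hij hdesc => h i j hij <| by
      have hne {k : ℤ} (hk : k ≠ 0) : c⁻¹ k ≠ 0 :=
        apply_zero_of_mem_signedPerm (inv_mem hodd) ▸ (c⁻¹).injective.ne hk
      have hroot : IsPosRoot (c⁻¹ j) (c⁻¹ i) := ⟨hdesc, hne hij.right_ne, hne hij.left_ne⟩
      rw [hsc, hsc]
      refine (gen_apply_lt_or_eq_reflection hs hroot).resolve_right ?_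
      rintro rfl
      exact hij.lt.not_gt (by simpa using apply_lt_of_len_le hc hroot hlt.le)
    obtain ⟨i, j, hij, rfl⟩ := exists_eq_reflection hs
    have hup : c i < c j := apply_lt_of_len_le hc hij hlt.le
    have huup : (u * c) i < (u * c) j :=
      h _ _ (isPosRoot_apply hodd hij.left_ne hij.right_ne hup) <| by
        have hcc (k : ℤ) : c⁻¹ (c k) = k := c.symm_apply_apply k
        simpa only [hsc, hcc, reflection_apply_left hij, reflection_apply_right hij] using hij.lt
    have hult := len_lt_of_apply_lt (mul_mem hu hc) hij (gen_mem_hyperoctahedral hs) huup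
    have hule := len_mul_gen_le (mul_mem hu hc) hs
    have hcle := len_mul_gen_le hc hs
    rw [mul_assoc] at hult hule
    lia

/-! ### The Bruhat order -/

/-- An edge `u → v` of the Bruhat graph: `v` is obtained from `u` by a reflection in a positive root
that `u` keeps positive, which amounts to `v` being longer than `u`. -/
def BruhatStep (u v : P) : Prop :=
  ∃ i j, IsPosRoot i j ∧ u i < u j ∧ v = u * reflection i j

theorem bruhatStep_mul_gen (hw : w ∈ hyperoctahedral n) (hs : s ∈ Sset n)
    (hlt : len n w < len n (w * s)) : BruhatStep w (w * s) := by
  obtain ⟨i, j, hij, rfl⟩ := exists_eq_reflection hs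
  exact ⟨i, j, hij, apply_lt_of_len_le hw hij hlt.le, rfl⟩

theorem BruhatStep.mul_gen (h : BruhatStep u v) (hs : s ∈ Sset n) :
    v = u * s ∨ BruhatStep (u * s) (v * s) := by
  obtain ⟨i, j, hij, hlt, rfl⟩ := h
  have hss (k : ℤ) : s (s k) = k := by
    rw [← Equiv.Perm.mul_apply, gen_mul_self hs, Equiv.Perm.one_apply]
  refine (gen_apply_lt_or_eq_reflection hs hij).symm.imp (congrArg (u * ·) ·.symm) fun hslt => ?_
  have hodd := gen_mem_signedPerm hs
  refine ⟨s i, s j, isPosRoot_apply hodd hij.left_ne hij.right_ne hslt, by simpa [hss], ?_⟩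
  rw [mul_assoc, mul_assoc, ← reflection_apply_mul hodd, hss, hss]

theorem reflTransGen_bruhatStep_mul_gen (h : ReflTransGen BruhatStep u v) (hs : s ∈ Sset n) :
    ReflTransGen BruhatStep (u * s) v ∨ ReflTransGen BruhatStep (u * s) (v * s) := by
  induction h with
  | refl => exact .inr .refl
  | tail _ hstep ih =>
    rcases ih with ih | ih
    · exact .inl (ih.tail hstep)
    · rcases hstep.mul_gen hs with rfl | hstep'
      exacts [.inl ih, .inr (ih.tail hstep')]

theorem exists_sublist_of_reflTransGen_bruhatStep {L : List P} (hL : ∀ g ∈ L, g ∈ Sset n)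
    (h : ReflTransGen BruhatStep u L.prod) : ∃ M : List P, M.Sublist L ∧ M.prod = u := by
  induction h using ReflTransGen.head_induction_on with
  | refl => exact ⟨L, .refl L, rfl⟩
  | head hstep _ ih =>
    obtain ⟨i, j, hij, hlt, rfl⟩ := hstep
    obtain ⟨M, hML, hM⟩ := ih
    have hdesc : M.prod j < M.prod i := by
      simpa [hM, reflection_apply_left hij, reflection_apply_right hij] using hlt
    obtain ⟨k, -, hk⟩ := strong_exchange (fun g hg => hL g (hML.subset hg)) hij hdesc
    refine ⟨M.eraseIdx k, (List.eraseIdx_sublist M k).trans hML, ?_⟩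
    rw [hk, hM, mul_assoc, reflection_mul_self hij, mul_one]

theorem sublist_append_singleton_iff {α : Type*} {L M : List α} {a : α} :
    M.Sublist (L ++ [a]) ↔ M.Sublist L ∨ ∃ M', M'.Sublist L ∧ M = M' ++ [a] := by
  simp only [List.sublist_append_iff, List.sublist_singleton]
  constructor
  · rintro ⟨M₁, M₂, rfl, hM, rfl | rfl⟩
    · exact .inl (by rwa [List.append_nil])
    · exact .inr ⟨M₁, hM, rfl⟩
  · rintro (hM | ⟨M', hM, rfl⟩)
    · exact ⟨M, [], by simp, hM, .inl rfl⟩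
    · exact ⟨M', [a], rfl, hM, .inr rfl⟩

theorem IsReduced.reflTransGen_bruhatStep {L M : List P} (hL : IsReduced n L) (h : M.Sublist L) :
    ReflTransGen BruhatStep M.prod L.prod := by
  induction L using List.reverseRecOn generalizing M with
  | nil => rw [List.sublist_nil.1 h]
  | append_singleton L s ih =>
    obtain ⟨hred, hs, hlt⟩ := hL.of_append_singleton
    have hstep := bruhatStep_mul_gen (prod_mem_hyperoctahedral hred.1) hs hlt
    rw [List.prod_append, List.prod_singleton]
    rcases sublist_append_singleton_iff.1 h with hM | ⟨M', hM, rfl⟩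
    · exact (ih hred hM).tail hstep
    · rw [List.prod_append, List.prod_singleton]
      exact (reflTransGen_bruhatStep_mul_gen (ih hred hM) hs).elim (·.tail hstep) id

theorem bruhat_iff :
    bruhat n u v ↔ v ∈ hyperoctahedral n ∧ ReflTransGen BruhatStep u v := by
  constructor
  · rintro ⟨L, M, hL, rfl, hlen, hsub, rfl⟩
    exact ⟨prod_mem_hyperoctahedral hL, IsReduced.reflTransGen_bruhatStep ⟨hL, hlen⟩ hsub⟩
  · rintro ⟨hv, h⟩
    obtain ⟨L, ⟨hL, hlen⟩, rfl⟩ := exists_isReduced hv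
    obtain ⟨M, hsub, hM⟩ := exists_sublist_of_reflTransGen_bruhatStep hL h
    exact ⟨L, M, hL, rfl, hlen, hsub, hM⟩

theorem left_mem_of_bruhat (h : bruhat n u v) : u ∈ hyperoctahedral n := by
  obtain ⟨L, M, hL, -, -, hsub, rfl⟩ := h
  exact prod_mem_hyperoctahedral fun g hg => hL g (hsub.subset hg)

theorem right_mem_of_bruhat (h : bruhat n u v) : v ∈ hyperoctahedral n :=
  (bruhat_iff.1 h).1

theorem bruhat_mul_gen_iff (hu : u ∈ hyperoctahedral n) (hv : v ∈ hyperoctahedral n)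
    (hs : s ∈ Sset n) (hus : len n u < len n (u * s)) (hvs : len n v < len n (v * s)) :
    bruhat n (u * s) (v * s) ↔ bruhat n u v := by
  have hustep := bruhatStep_mul_gen hu hs hus
  have hvstep := bruhatStep_mul_gen hv hs hvs
  rw [bruhat_iff, bruhat_iff, and_iff_right hv,
    and_iff_right (mul_mem hv (gen_mem_hyperoctahedral hs))]
  refine ⟨fun h => ?_, fun h =>
    (reflTransGen_bruhatStep_mul_gen h hs).elim (·.tail hvstep) id⟩
  obtain ⟨L, hL, rfl⟩ := exists_isReduced hv
  have hLs : ∀ g ∈ L ++ [s], g ∈ Sset n :=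
    List.forall_mem_append.2 ⟨hL.1, List.forall_mem_singleton.2 hs⟩
  obtain ⟨M, hM, hprod⟩ :=
    exists_sublist_of_reflTransGen_bruhatStep hLs (by simpa using h)
  rcases sublist_append_singleton_iff.1 hM with hsub | ⟨M', hsub, rfl⟩
  · exact .head hustep (hprod ▸ hL.reflTransGen_bruhatStep hsub)
  · rw [List.prod_append, List.prod_singleton, mul_left_inj] at hprod
    exact hprod ▸ hL.reflTransGen_bruhatStep hsub

theorem bruhat_mul_iff_of_len_mul {c : P} (hu : u ∈ hyperoctahedral n)
    (hv : v ∈ hyperoctahedral n) (hc : c ∈ hyperoctahedral n)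
    (huc : len n (u * c) = len n u + len n c) (hvc : len n (v * c) = len n v + len n c) :
    bruhat n (u * c) (v * c) ↔ bruhat n u v := by
  induction hc using reduced_induction with
  | one => rw [mul_one, mul_one]
  | mul_gen c s hc hs hlt ih =>
    have hsplit {w : P} (hw : w ∈ hyperoctahedral n)
        (hadd : len n (w * (c * s)) = len n w + len n (c * s)) :
        len n (w * c) = len n w + len n c ∧ len n (w * c) < len n (w * c * s) := by
      have hwc := len_mul_le hw hc
      have hwcs := len_mul_gen_le (mul_mem hw hc) hs
      rw [← mul_assoc] at hadd
      lia
    obtain ⟨huc, hucs⟩ := hsplit hu huc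
    obtain ⟨hvc, hvcs⟩ := hsplit hv hvc
    rw [← mul_assoc, ← mul_assoc,
      bruhat_mul_gen_iff (mul_mem hu hc) (mul_mem hv hc) hs hucs hvcs, ih huc hvc]

/-! ### Positions of negative values -/

/-- The positive positions at which a signed permutation takes negative values. -/
def negSet (w : P) : Set ℤ := {i | 0 < i ∧ w i < 0}

theorem encard_sep_lt_le_encard_sep_swap_lt {α β : Type*} [LinearOrder α] [LinearOrder β]
    {S : Set α} (hS : IsUpperSet S) {f : α → β} {a b : α} (hab : a < b) (hf : f a ≤ f b) (c : β) :
    {k ∈ S | f k < c}.encard ≤ {k ∈ S | f (Equiv.swap a b k) < c}.encard := by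
  rcases lt_or_ge (f b) c with hb | hb
  · refine Set.encard_le_encard fun k ⟨hkS, hk⟩ => ⟨hkS, ?_⟩
    rw [Equiv.swap_apply_def]
    split_ifs
    exacts [hb, hf.trans_lt hb, hk]
  · refine Set.encard_le_encard_of_injOn (f := Equiv.swap a b) (fun k ⟨hkS, hk⟩ => ⟨?_, ?_⟩)
      (Equiv.injective _).injOn
    · have hkb : k ≠ b := fun h => hb.not_gt (h ▸ hk)
      rw [Equiv.swap_apply_def, if_neg hkb]
      split_ifs with hka
      exacts [hS (hka ▸ hab.le) hkS, hkS]
    · rwa [Equiv.swap_apply_self]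

theorem BruhatStep.encard_negSet_inter_le (h : BruhatStep u v) (hu : u ∈ signedPerm) {S : Set ℤ}
    (hS : IsUpperSet S) : (negSet u ∩ S).encard ≤ (negSet v ∩ S).encard := by
  have hsep (w : P) : negSet w ∩ S = {k ∈ Set.Ioi 0 ∩ S | w k < 0} := by
    ext k
    exact and_right_comm
  have hpos : IsUpperSet (Set.Ioi (0 : ℤ) ∩ S) := (isUpperSet_Ioi 0).inter hS
  obtain ⟨i, j, ⟨hij, hi, hj⟩, hlt, rfl⟩ := h
  have hfirst := encard_sep_lt_le_encard_sep_swap_lt hpos hij hlt.le 0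
  rw [hsep, hsep, reflection]
  split_ifs with hshort
  · exact hfirst
  · have hle : u (Equiv.swap i j (-j)) ≤ u (Equiv.swap i j (-i)) := by
      rw [Equiv.swap_apply_of_ne_of_ne (by lia) (by lia),
        Equiv.swap_apply_of_ne_of_ne (by lia) (by lia), mem_signedPerm.1 hu, mem_signedPerm.1 hu]
      exact neg_le_neg hlt.le
    -- A long reflection is two transpositions, and each of them moves a smaller value to the right.
    rw [Equiv.swap_comm (-i)]
    exact hfirst.trans (encard_sep_lt_le_encard_sep_swap_lt (f := fun k => u (Equiv.swap i j k))
      hpos (neg_lt_neg hij) hle 0)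

theorem encard_negSet_inter_le_of_bruhat (h : bruhat n u v) {S : Set ℤ} (hS : IsUpperSet S) :
    (negSet u ∩ S).encard ≤ (negSet v ∩ S).encard := by
  have hu := hyperoctahedral_le_signedPerm (left_mem_of_bruhat h)
  suffices v ∈ signedPerm ∧ (negSet u ∩ S).encard ≤ (negSet v ∩ S).encard from this.2
  have hpath := (bruhat_iff.1 h).2
  clear h
  induction hpath with
  | refl => exact ⟨hu, le_rfl⟩
  | tail _ hstep ih =>
    refine ⟨?_, ih.2.trans (hstep.encard_negSet_inter_le ih.1 hS)⟩
    obtain ⟨i, j, hij, -, rfl⟩ := hstep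
    exact mul_mem ih.1 (reflection_mem_signedPerm hij)

theorem subset_of_encard_inter_isUpperSet_eq {α : Type*} [PartialOrder α] {A B : Set α}
    (hA : A.Finite) (h : ∀ S, IsUpperSet S → (A ∩ S).encard = (B ∩ S).encard) : A ⊆ B := by
  intro k hkA
  by_contra hkB
  have hB : B ∩ Set.Ici k = B ∩ Set.Ioi k := by
    ext m
    refine and_congr_right fun hm => ?_
    exact ⟨fun hkm => lt_of_le_of_ne hkm fun h => hkB (h ▸ hm), fun hkm => hkm.le⟩
  have hssub : A ∩ Set.Ioi k ⊂ A ∩ Set.Ici k :=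
    ⟨Set.inter_subset_inter_right A Set.Ioi_subset_Ici_self,
      fun hsub => lt_irrefl k (hsub ⟨hkA, Set.self_mem_Ici⟩).2⟩
  refine ((hA.inter_of_left _).encard_lt_encard hssub).ne ?_
  rw [h _ (isUpperSet_Ioi k), h _ (isUpperSet_Ici k), hB]

theorem finite_negSet (hn : 1 ≤ n) (hw : w ∈ hyperoctahedral n) : (negSet w).Finite := by
  refine (Set.finite_Ioc 0 (n : ℤ)).subset fun k ⟨hk, hneg⟩ => ⟨hk, not_lt.1 fun hlt => ?_⟩
  rw [apply_eq_of_lt hn hw hlt] at hneg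
  exact hk.not_gt hneg

theorem negSet_eq_of_bruhat_of_bruhat (hn : 1 ≤ n) (huw : bruhat n u w) (hwv : bruhat n w v)
    (huv : negSet u = negSet v) : negSet w = negSet u := by
  have hcount (S : Set ℤ) (hS : IsUpperSet S) : (negSet w ∩ S).encard = (negSet u ∩ S).encard :=
    le_antisymm (huv ▸ encard_negSet_inter_le_of_bruhat hwv hS)
      (encard_negSet_inter_le_of_bruhat huw hS)
  exact (subset_of_encard_inter_isUpperSet_eq
      (finite_negSet hn (right_mem_of_bruhat huw)) hcount).antisymm
    (subset_of_encard_inter_isUpperSet_eq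
      (finite_negSet hn (left_mem_of_bruhat huw)) fun S hS => (hcount S hS).symm)

/-! ### The parabolic decomposition -/

theorem symN_le_hyperoctahedral : SymN n ≤ hyperoctahedral n :=
  Subgroup.closure_mono (Set.subset_insert _ _)

theorem symLR_le_symN : SymLR n l ≤ SymN n :=
  Subgroup.closure_mono (Set.image_mono fun _ hm => ⟨hm.1, hm.2.1⟩)

theorem symN_le_signedPerm : SymN n ≤ signedPerm :=
  symN_le_hyperoctahedral.trans hyperoctahedral_le_signedPerm

theorem symN_apply_pos_iff (hb : b ∈ SymN n) : 0 < b i ↔ 0 < i := by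
  suffices SymN n ≤ MulAction.stabilizer P (Set.Ioi (0 : ℤ)) from
    MulAction.mem_stabilizer_set.1 (this hb) i
  refine (Subgroup.closure_le _).2 ?_
  rintro _ ⟨m, ⟨hm, -⟩, rfl⟩
  refine MulAction.mem_stabilizer_set.2 fun k => ?_
  rw [Equiv.Perm.smul_def, sgen_apply hm, Set.mem_Ioi, Set.mem_Ioi]
  split_ifs <;> lia

theorem symN_apply_neg_iff (hb : b ∈ SymN n) : b i < 0 ↔ i < 0 := by
  have h := symN_apply_pos_iff (i := -i) hb
  rwa [mem_signedPerm.1 (symN_le_signedPerm hb), neg_pos, neg_pos] at h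

theorem symLR_apply_mem_Ioc_iff (hb : b ∈ SymLR n l) :
    b i ∈ Set.Ioc 0 (l : ℤ) ↔ i ∈ Set.Ioc 0 (l : ℤ) := by
  suffices SymLR n l ≤ MulAction.stabilizer P (Set.Ioc 0 (l : ℤ)) from
    MulAction.mem_stabilizer_set.1 (this hb) i
  refine (Subgroup.closure_le _).2 ?_
  rintro _ ⟨m, ⟨hm, -, hml⟩, rfl⟩
  refine MulAction.mem_stabilizer_set.2 fun k => ?_
  rw [Equiv.Perm.smul_def, sgen_apply hm, Set.mem_Ioc, Set.mem_Ioc]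
  split_ifs <;> lia

theorem negSet_symN_mul {a : P} (ha : a ∈ SymN n) : negSet (a * w) = negSet w := by
  ext k
  exact and_congr_right fun _ => symN_apply_neg_iff ha

theorem negSet_mul_symN (hb : b ∈ SymN n) : negSet (w * b) = b ⁻¹' negSet w := by
  ext k
  exact and_congr_left fun _ => (symN_apply_pos_iff hb).symm

theorem rgen_succ_mem_signedPerm (m : ℕ) : rgen (m + 1) ∈ signedPerm := by
  induction m with
  | zero => exact gen_mem_signedPerm (n := 0) (Set.mem_insert _ _)
  | succ m ih =>
    refine mul_mem (gen_mem_signedPerm (n := m + 2) ?_) ih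
    exact Set.mem_insert_of_mem _ ⟨m + 1, ⟨by lia, by lia⟩, rfl⟩

theorem al_mem_signedPerm (l : ℕ) : al l ∈ signedPerm := by
  refine Subgroup.list_prod_mem _ fun g hg => ?_
  obtain ⟨m, -, rfl⟩ := List.mem_map.1 hg
  exact rgen_succ_mem_signedPerm m

theorem rgen_succ_apply (m : ℕ) (hi : 0 < i) :
    rgen (m + 1) i = if i = 1 then -((m : ℤ) + 1) else if i ≤ m + 1 then i - 1 else i := by
  induction m with
  | zero =>
    rw [rgen, tgen_apply]
    split_ifs <;> lia
  | succ m ih =>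
    rw [rgen, Equiv.Perm.mul_apply, ih, sgen_apply (by lia)]
    split_ifs <;> lia

theorem al_apply (l : ℕ) (hi : 0 < i) : al l i = if i ≤ l then i - (l + 1) else i := by
  induction l generalizing i with
  | zero =>
    rw [if_neg (by lia)]
    rfl
  | succ l ih =>
    have hal : al (l + 1) = al l * rgen (l + 1) := by simp [al, List.range_succ]
    rw [hal, Equiv.Perm.mul_apply, rgen_succ_apply l hi]
    have hodd := mem_signedPerm.1 (al_mem_signedPerm l)
    grind

theorem negSet_al (l : ℕ) : negSet (al l) = Set.Ioc 0 (l : ℤ) := by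
  ext i
  refine and_congr_right fun hi => ?_
  rw [al_apply l hi]
  split_ifs <;> lia

/-- The elements of `W_n` that are negative exactly at the positions `1, …, l` among the positive
ones. They form the coset `𝔖_n a_l`, which contains `w b_w` when `ℓ_t(w) = l`. -/
def negPrefix (n l : ℕ) : Set P := {w ∈ hyperoctahedral n | negSet w = Set.Ioc 0 (l : ℤ)}

theorem mul_mem_negPrefix_of_isDecomp {a σ : P} (hw : w ∈ hyperoctahedral n)
    (h : IsDecomp n l w a σ b) : w * b ∈ negPrefix n l := by
  obtain ⟨ha, hb, hσ, rfl, -⟩ := h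
  refine ⟨mul_mem hw (symN_le_hyperoctahedral hb.1), ?_⟩
  rw [inv_mul_cancel_right, mul_assoc, negSet_symN_mul ha.1, negSet_mul_symN (symLR_le_symN hσ),
    negSet_al]
  exact Set.ext fun _ => symLR_apply_mem_Ioc_iff hσ

theorem mul_mem_negPrefix_of_bruhat_of_bruhat (hn : 1 ≤ n) (hb : b ∈ SymN n)
    (hu : u * b ∈ negPrefix n l) (hv : v * b ∈ negPrefix n l) (huw : bruhat n u w)
    (hwv : bruhat n w v) : w * b ∈ negPrefix n l := by
  refine ⟨mul_mem (right_mem_of_bruhat huw) (symN_le_hyperoctahedral hb), ?_⟩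
  have huv := hu.2.trans hv.2.symm
  rw [negSet_mul_symN hb, negSet_mul_symN hb, (Set.preimage_injective.2 b.surjective).eq_iff] at huv
  rw [negSet_mul_symN hb, negSet_eq_of_bruhat_of_bruhat hn huw hwv huv, ← negSet_mul_symN hb, hu.2]

theorem apply_lt_apply_add_one_of_mem_Yset (hn : 1 ≤ n) (hb : b ∈ Yset n l) (hi : 0 < i)
    (hil : i ≠ l) : b i < b (i + 1) := by
  lift i to ℕ using hi.le
  have hbn := symN_le_hyperoctahedral hb.1
  rcases le_or_gt i (n - 1) with hin | hin
  · have hroot : IsPosRoot (i : ℤ) (i + 1) := ⟨by lia, by lia, by lia⟩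
    refine apply_lt_of_len_le hbn hroot ?_
    rw [← sgen_eq_reflection]
    exact hb.2 _ (Subgroup.subset_closure ⟨i, ⟨by lia, hin, by lia⟩, rfl⟩)
  · rw [apply_eq_of_lt hn hbn (i := (i : ℤ) + 1) (by lia)]
    by_contra! hle
    have := b.injective (apply_eq_of_lt hn hbn (i := b i) (by lia))
    lia

theorem strictMonoOn_of_mem_Yset (hn : 1 ≤ n) (hb : b ∈ Yset n l) {S : Set ℤ}
    (hS : S.OrdConnected) (hpos : ∀ i ∈ S, 0 < i) (hl : ((l : ℤ) ∉ S) ∨ (l + 1 : ℤ) ∉ S) :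
    StrictMonoOn b S :=
  strictMonoOn_of_lt_add_one hS fun i _ hi hi' =>
    apply_lt_apply_add_one_of_mem_Yset hn hb (hpos i hi) fun h => by
      subst h
      exact hl.elim (· hi) (· hi')

theorem le_and_lt_of_inversion_of_mem_Yset (hn : 1 ≤ n) (hb : b ∈ Yset n l) (hi : 0 < i)
    (hij : i < j) (hinv : b j < b i) : i ≤ l ∧ l < j := by
  have hlow : StrictMonoOn b (Set.Ioc 0 (l : ℤ)) :=
    strictMonoOn_of_mem_Yset hn hb Set.ordConnected_Ioc (fun _ => And.left) (.inr (by simp))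
  have hhigh : StrictMonoOn b (Set.Ioi (l : ℤ)) :=
    strictMonoOn_of_mem_Yset hn hb Set.ordConnected_Ioi
      (fun _ => (Int.natCast_nonneg l).trans_lt) (.inl (by simp))
  constructor <;> by_contra! hl
  · exact hinv.not_gt (hhigh hl (hl.trans hij) hij)
  · exact hinv.not_gt (hlow ⟨hi, hij.le.trans hl⟩ ⟨hi.trans hij, hl⟩ hij)

theorem apply_neg_iff_of_mem_negPrefix (hu : u ∈ negPrefix n l) (hi : 0 < i) :
    u i < 0 ↔ i ≤ l := by
  simpa [negSet, hi] using Set.ext_iff.1 hu.2 i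

theorem apply_lt_of_inversion_of_mem_Yset (hn : 1 ≤ n) (hu : u ∈ negPrefix n l)
    (hb : b ∈ Yset n l) (h : IsPosRoot i j) (hinv : b j < b i) : u i < u j := by
  have hpositive {i j : ℤ} (hi : 0 < i) (hij : i < j) (hinv : b j < b i) : u i < 0 ∧ 0 ≤ u j := by
    obtain ⟨hil, hlj⟩ := le_and_lt_of_inversion_of_mem_Yset hn hb hi hij hinv
    exact ⟨(apply_neg_iff_of_mem_negPrefix hu hi).2 hil,
      not_lt.1 fun h => hlj.not_ge ((apply_neg_iff_of_mem_negPrefix hu (hi.trans hij)).1 h)⟩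
  have hodd := mem_signedPerm.1 (hyperoctahedral_le_signedPerm hu.1)
  have hbodd := mem_signedPerm.1 (symN_le_signedPerm hb.1)
  rcases lt_or_gt_of_ne h.left_ne with hi | hi
  · rcases lt_or_gt_of_ne h.right_ne with hj | hj
    · obtain ⟨huj, hui⟩ := hpositive (neg_pos.2 hj) (neg_lt_neg h.lt) (by rw [hbodd, hbodd]; lia)
      rw [hodd] at huj hui
      lia
    · have hbi := (symN_apply_neg_iff hb.1).2 hi
      have hbj := (symN_apply_pos_iff hb.1).2 hj
      lia
  · obtain ⟨hui, huj⟩ := hpositive hi h.lt hinv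
    exact hui.trans_le huj

theorem bruhat_mul_inv_iff_of_mem_negPrefix (hn : 1 ≤ n) (hu : u ∈ negPrefix n l)
    (hv : v ∈ negPrefix n l) (hb : b ∈ Yset n l) :
    bruhat n (u * b⁻¹) (v * b⁻¹) ↔ bruhat n u v := by
  have hbn := symN_le_hyperoctahedral hb.1
  have hadd {w : P} (hw : w ∈ negPrefix n l) : len n (w * b⁻¹) = len n w + len n b⁻¹ :=
    len_mul_of_disjoint_inversions hw.1 (inv_mem hbn) fun i j hij hinv =>
      apply_lt_of_inversion_of_mem_Yset hn hw hb hij (by rwa [inv_inv] at hinv)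
  exact bruhat_mul_iff_of_len_mul hu.1 hv.1 (inv_mem hbn) (hadd hu) (hadd hv)

theorem mem_negPrefix_of_bruhat_of_bruhat (hn : 1 ≤ n) (hu : u ∈ negPrefix n l)
    (hv : v ∈ negPrefix n l) (huw : bruhat n u w) (hwv : bruhat n w v) : w ∈ negPrefix n l := by
  simpa using mul_mem_negPrefix_of_bruhat_of_bruhat (b := 1) hn (one_mem _) (by simpa using hu)
    (by simpa using hv) huw hwv

theorem bijOn_mul_inv_bruhat_interval (hn : 1 ≤ n) (hu : u ∈ negPrefix n l)
    (hv : v ∈ negPrefix n l) (hb : b ∈ Yset n l) :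
    Set.BijOn (fun z => z * b⁻¹) {z | bruhat n u z ∧ bruhat n z v}
      {z | bruhat n (u * b⁻¹) z ∧ bruhat n z (v * b⁻¹)} := by
  refine (Equiv.mulRight b⁻¹).bijOn fun z => ?_
  have hiff (hz : z ∈ negPrefix n l) :
      bruhat n (u * b⁻¹) (z * b⁻¹) ∧ bruhat n (z * b⁻¹) (v * b⁻¹) ↔ bruhat n u z ∧ bruhat n z v :=
    and_congr (bruhat_mul_inv_iff_of_mem_negPrefix hn hu hz hb)
      (bruhat_mul_inv_iff_of_mem_negPrefix hn hz hv hb)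
  refine ⟨fun h => (hiff ?_).1 h, fun h => (hiff ?_).2 h⟩
  · simpa using mul_mem_negPrefix_of_bruhat_of_bruhat hn hb.1 (by simpa using hu)
      (by simpa using hv) h.1 h.2
  · exact mem_negPrefix_of_bruhat_of_bruhat hn hu hv h.1 h.2

end SignedPerm

open SignedPerm

/-- If `ℓ_t(x) = ℓ_t(y) = l`, `x ≤ y` and `b_x = b_y = b`,
then `xb ≤ yb` and `z ↦ z b⁻¹` is a poset isomorphism `[xb, yb] → [x, y]`. -/
theorem decomp_interval_iso (n l : ℕ) (hn : 1 ≤ n) (x y : P)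
    (hx : x ∈ Wset n) (hy : y ∈ Wset n)
    (htx : tlen n x = l) (hty : tlen n y = l) (hxy : bruhat n x y)
    (ax σx ay σy b : P)
    (hdx : IsDecomp n l x ax σx b) (hdy : IsDecomp n l y ay σy b) :
    bruhat n (x * b) (y * b) ∧
    Set.BijOn (fun z => z * b⁻¹)
      {z | bruhat n (x * b) z ∧ bruhat n z (y * b)}
      {z | bruhat n x z ∧ bruhat n z y} ∧
    (∀ z z', (bruhat n (x * b) z ∧ bruhat n z (y * b)) →
      (bruhat n (x * b) z' ∧ bruhat n z' (y * b)) →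
      (bruhat n z z' ↔ bruhat n (z * b⁻¹) (z' * b⁻¹))) := by
  have hb : b ∈ Yset n l := hdx.2.1
  have hxb : x * b ∈ negPrefix n l :=
    mul_mem_negPrefix_of_isDecomp (left_mem_of_bruhat hxy) hdx
  have hyb : y * b ∈ negPrefix n l :=
    mul_mem_negPrefix_of_isDecomp (right_mem_of_bruhat hxy) hdy
  have hmem {z : P} (hz : bruhat n (x * b) z ∧ bruhat n z (y * b)) : z ∈ negPrefix n l :=
    mem_negPrefix_of_bruhat_of_bruhat hn hxb hyb hz.1 hz.2
  refine ⟨?_, ?_, fun z z' hz hz' =>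
    (bruhat_mul_inv_iff_of_mem_negPrefix hn (hmem hz) (hmem hz') hb).symm⟩
  · simpa [hxy] using (bruhat_mul_inv_iff_of_mem_negPrefix hn hxb hyb hb).symm
  · simpa using bijOn_mul_inv_bruhat_interval hn hxb hyb hb
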